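/- arXiv:1008.4220 — 2 statements merged into one kernel-verified Lean document; each statement's English description precedes it below -/
import Mathlib

section
/- Let z ∈ ℝ^p have nonnegative components and let λ > 0. Then the function w ↦ (1/2)‖w − z‖_2² + λΩ(w) has a unique minimizer w*, the function s ↦ ‖s − z/λ‖_2² has a unique minimizer s* over the submodular polyhedron 𝒫, and w* = z − λ s*. -/
/-!
Put `w = z − λ s` with `s` the Euclidean projection of `z / λ` onto the compact convex set `𝒫`.
Two facts link `Ω` with `𝒫`: every `s ∈ 𝒫` satisfies `⟨s, w⟩ ≤ Ω(w)` for all `w` (Abel summation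
applied to the nonnegative set-function `F − s`, see `inner_le_OmegaF`), and for `w ≥ 0` the bound
`⟨s, w⟩ = Ω(w)` is attained at some `s ∈ 𝒫` (Edmonds' greedy vector, see `exists_greedy`; this is
where submodularity and monotonicity enter).

The variational inequality of the projection says that `s` maximises `⟨w, ·⟩` over `𝒫`; since `𝒫`
is stable under setting a coordinate to zero and `z ≥ 0`, it forces `w ≥ 0`, hence
`⟨s, w⟩ = Ω(w)`. Consequently, for every `v`, completing the square gives
`½‖v − z‖² + λ Ω(v) ≥ ½‖v − z‖² + λ ⟨s, v⟩ = ½‖w − z‖² + λ Ω(w) + ½‖v − w‖²`,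
which yields both minimality and uniqueness of `w`.
-/

open Finset MeasureTheory
open scoped Classical NNReal

noncomputable section

/-- A set-function on subsets of `α` is submodular:
`F (A ∪ B) + F (A ∩ B) ≤ F A + F B`. -/
def Submodular {α : Type*} [DecidableEq α] (F : Finset α → ℝ) : Prop :=
  ∀ A B : Finset α, F (A ∪ B) + F (A ∩ B) ≤ F A + F B

/-- A set-function is nondecreasing: `A ⊆ B → F A ≤ F B`. -/
def MonotoneF {α : Type*} (F : Finset α → ℝ) : Prop :=
  ∀ ⦃A B : Finset α⦄, A ⊆ B → F A ≤ F B

/-- A set `A` is stable for `F` if enlarging it strictly increases `F`. -/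
def StableSet {α : Type*} (F : Finset α → ℝ) (A : Finset α) : Prop :=
  ∀ B : Finset α, A ⊆ B → A ≠ B → F A < F B

/-- A set `A` is separable for `F` if it can be partitioned into `k ≥ 2` nonempty
disjoint sets on which `F` is additive. -/
def SeparableSet {α : Type*} [DecidableEq α] (F : Finset α → ℝ) (A : Finset α) : Prop :=
  ∃ P : Finset (Finset α), 2 ≤ P.card ∧ (∀ B ∈ P, B.Nonempty) ∧
    (P : Set (Finset α)).PairwiseDisjoint id ∧ P.biUnion id = A ∧ F A = ∑ B ∈ P, F B

/-- The Lovász extension of a set-function `F`, evaluated via a decreasing ordering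
`w_{j_1} ≥ ⋯ ≥ w_{j_p}` of the components of `w`:
`f(w) = ∑ₖ w_{j_k} (F({j_1,…,j_k}) − F({j_1,…,j_{k−1}}))`. -/
noncomputable def lovasz {α : Type*} [Fintype α] [DecidableEq α]
    (F : Finset α → ℝ) (w : α → ℝ) : ℝ :=
  let e : Fin (Fintype.card α) ≃ α := (Fintype.equivFin α).symm
  let σ : Equiv.Perm (Fin (Fintype.card α)) := Tuple.sort (fun i => -(w (e i)))
  ∑ k : Fin (Fintype.card α),
    w (e (σ k)) *
      (F ((Finset.univ.filter (fun j => j ≤ k)).image (fun j => e (σ j))) -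
       F ((Finset.univ.filter (fun j => j < k)).image (fun j => e (σ j))))

/-- `Ω(w) = f(|w|)` where `f` is the Lovász extension of `F`. -/
noncomputable def OmegaF {α : Type*} [Fintype α] [DecidableEq α]
    (F : Finset α → ℝ) (w : α → ℝ) : ℝ :=
  lovasz F (fun i => |w i|)

/-- The dual norm `N*(s) = sup { ⟨s, w⟩ : N(w) ≤ 1 }`. -/
noncomputable def dualNorm {α : Type*} [Fintype α] (N : (α → ℝ) → ℝ) (s : α → ℝ) : ℝ :=
  sSup {x : ℝ | ∃ w : α → ℝ, N w ≤ 1 ∧ x = ∑ i, s i * w i}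

/-- The support of a vector, as a finset. -/
def suppF {α : Type*} [Fintype α] (w : α → ℝ) : Finset α :=
  Finset.univ.filter (fun i => w i ≠ 0)

/-- The restriction `F_J` of `F` to `J`, as a set-function on subsets of `J`. -/
def Frestrict {p : ℕ} (F : Finset (Fin p) → ℝ) (J : Finset (Fin p)) :
    Finset {x : Fin p // x ∈ J} → ℝ :=
  fun A => F (A.image Subtype.val)

/-- The contraction `F^J` of `F` by `J`: `F^J(A) = F(A ∪ J) − F(J)` for `A ⊆ Jᶜ`. -/
def Fcontract {p : ℕ} (F : Finset (Fin p) → ℝ) (J : Finset (Fin p)) :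
    Finset {x : Fin p // x ∈ Jᶜ} → ℝ :=
  fun A => F (A.image Subtype.val ∪ J) - F J


/-- The submodular polyhedron `𝒫 = {s ∈ ℝ₊^p : ∀ A, s(A) ≤ F(A)}`. -/
def submodularPolyhedron {p : ℕ} (F : Finset (Fin p) → ℝ) : Set (Fin p → ℝ) :=
  {s | (∀ i, 0 ≤ s i) ∧ ∀ A : Finset (Fin p), ∑ k ∈ A, s k ≤ F A}

/-! ### Prefixes of an ordering and the Lovász extension -/

/-- The set `{τ 0, …, τ (k - 1)}` of the first `k` elements in the ordering `τ`. -/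
def firstElems {n p : ℕ} (τ : Fin n ≃ Fin p) (k : ℕ) : Finset (Fin p) :=
  (Finset.univ.filter (fun j : Fin n => (j : ℕ) < k)).image τ

lemma mem_firstElems {n p : ℕ} (τ : Fin n ≃ Fin p) (k : ℕ) (x : Fin p) :
    x ∈ firstElems τ k ↔ ((τ.symm x : Fin n) : ℕ) < k := by
  simp only [firstElems, Finset.mem_image, Finset.mem_filter, Finset.mem_univ, true_and]
  constructor
  · rintro ⟨j, hj, rfl⟩
    simpa using hj
  · intro h
    exact ⟨τ.symm x, h, by simp⟩

lemma firstElems_zero {n p : ℕ} (τ : Fin n ≃ Fin p) : firstElems τ 0 = ∅ := by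
  ext x
  simp [mem_firstElems]

lemma firstElems_last {n p : ℕ} (τ : Fin n ≃ Fin p) : firstElems τ n = Finset.univ := by
  ext x
  simp [mem_firstElems]

lemma firstElems_succ {n p : ℕ} (τ : Fin n ≃ Fin p) (k : Fin n) :
    firstElems τ (k + 1) = insert (τ k) (firstElems τ k) := by
  ext x
  have : x = τ k ↔ ((τ.symm x : Fin n) : ℕ) = k := by
    rw [← Fin.ext_iff, Equiv.symm_apply_eq]
  rw [Finset.mem_insert, mem_firstElems, mem_firstElems, this]
  omega

lemma notMem_firstElems {n p : ℕ} (τ : Fin n ≃ Fin p) (k : Fin n) :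
    τ k ∉ firstElems τ k := by
  simp [mem_firstElems]

/-- The sorting permutation in the definition of `lovasz`, packaged as an ordering `τ` of the ground
set along which `w` is nonincreasing. -/
lemma exists_order_lovasz {p : ℕ} (F : Finset (Fin p) → ℝ) (w : Fin p → ℝ) :
    ∃ (n : ℕ) (τ : Fin n ≃ Fin p), Antitone (fun k => w (τ k)) ∧
      lovasz F w = ∑ k : Fin n, w (τ k) *
        (F (firstElems τ (k + 1)) - F (firstElems τ k)) := by
  let e : Fin (Fintype.card (Fin p)) ≃ Fin p := (Fintype.equivFin (Fin p)).symm
  let σ : Equiv.Perm (Fin (Fintype.card (Fin p))) := Tuple.sort (fun i => -(w (e i)))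
  refine ⟨_, σ.trans e, ?_, ?_⟩
  · intro i j hij
    have := Tuple.monotone_sort (fun i => -(w (e i))) hij
    simp only [Function.comp_apply, neg_le_neg_iff] at this
    exact this
  · unfold lovasz
    refine Finset.sum_congr rfl fun k _ => ?_
    simp only [firstElems, Nat.lt_succ_iff]
    rfl

/-! ### The support-function bound -/

/-- Abel summation against a nonincreasing weight `a`; the boundary term `a n * g n` is kept so that
the induction goes through. -/
lemma abel_nonneg (a g : ℕ → ℝ) (ha : Antitone a) (hg : ∀ k, 0 ≤ g k)
    (hg0 : g 0 = 0) (n : ℕ) :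
    a n * g n ≤ ∑ k ∈ Finset.range n, a k * (g (k + 1) - g k) := by
  induction n with
  | zero => simp [hg0]
  | succ n ih =>
    rw [Finset.sum_range_succ]
    have := mul_le_mul_of_nonneg_right (ha (Nat.le_succ n)) (hg (n + 1))
    simp only [Nat.succ_eq_add_one] at this
    nlinarith

lemma abel_nonneg_fin {n : ℕ} (a : Fin n → ℝ) (g : ℕ → ℝ) (ha : Antitone a)
    (ha0 : ∀ k, 0 ≤ a k) (hg : ∀ k, 0 ≤ g k) (hg0 : g 0 = 0) :
    0 ≤ ∑ k : Fin n, a k * (g (k + 1) - g k) := by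
  let b : ℕ → ℝ := fun k => if h : k < n then a ⟨k, h⟩ else 0
  have hb : Antitone b := by
    intro i j hij
    simp only [b]
    split_ifs with h1 h2
    · exact ha (by simpa using hij)
    · omega
    · exact ha0 _
    · exact le_rfl
  have h := abel_nonneg b g hb hg hg0 n
  have hbn : b n = 0 := by simp [b]
  rw [hbn, zero_mul, Finset.sum_range] at h
  simpa [b] using h

/-- Abel summation applied to `F - s`, which is nonnegative on every prefix. -/
lemma inner_le_lovasz {p : ℕ} (F : Finset (Fin p) → ℝ) (hF0 : F ∅ = 0) {s : Fin p → ℝ}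
    (hs : s ∈ submodularPolyhedron F) {w : Fin p → ℝ} (hw : ∀ i, 0 ≤ w i) :
    ∑ i, s i * w i ≤ lovasz F w := by
  obtain ⟨n, τ, hτ, hL⟩ := exists_order_lovasz F w
  let g : ℕ → ℝ := fun k => F (firstElems τ k) - ∑ i ∈ firstElems τ k, s i
  have h := abel_nonneg_fin (fun k => w (τ k)) g hτ (fun k => hw _)
    (fun k => sub_nonneg.2 (hs.2 _)) (by simp [g, firstElems_zero, hF0])
  have hterm : ∀ k : Fin n, w (τ k) * (g (k + 1) - g k) =
      w (τ k) * (F (firstElems τ (k + 1)) - F (firstElems τ k)) - s (τ k) * w (τ k) := by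
    intro k
    have : ∑ i ∈ firstElems τ (k + 1), s i = s (τ k) + ∑ i ∈ firstElems τ k, s i := by
      rw [firstElems_succ, Finset.sum_insert (notMem_firstElems τ k)]
    simp only [g, this]
    ring
  rw [Finset.sum_congr rfl fun k _ => hterm k, Finset.sum_sub_distrib, ← hL,
    Equiv.sum_comp τ (fun i => s i * w i)] at h
  linarith

lemma inner_le_OmegaF {p : ℕ} (F : Finset (Fin p) → ℝ) (hF0 : F ∅ = 0) {s : Fin p → ℝ}
    (hs : s ∈ submodularPolyhedron F) (w : Fin p → ℝ) :
    ∑ i, s i * w i ≤ OmegaF F w :=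
  (Finset.sum_le_sum fun i _ => mul_le_mul_of_nonneg_left (le_abs_self (w i)) (hs.1 i)).trans
    (inner_le_lovasz F hF0 hs fun i => abs_nonneg (w i))

/-! ### Greedy vectors -/

/-- Edmonds' greedy algorithm: the increments of `F` along a decreasing ordering of `w` form a
point of the submodular polyhedron at which the linear form `w` equals the Lovász extension. -/
lemma exists_greedy {p : ℕ} (F : Finset (Fin p) → ℝ) (hsub : Submodular F)
    (hmono : MonotoneF F) (hF0 : F ∅ = 0) (w : Fin p → ℝ) :
    ∃ s ∈ submodularPolyhedron F, ∑ i, s i * w i = lovasz F w := by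
  obtain ⟨n, τ, hτ, hL⟩ := exists_order_lovasz F w
  let s : Fin p → ℝ := fun i =>
    F (firstElems τ (τ.symm i + 1)) - F (firstElems τ (τ.symm i))
  have hsτ : ∀ k : Fin n, s (τ k) = F (firstElems τ (k + 1)) - F (firstElems τ k) := by
    intro k
    simp [s]
  refine ⟨s, ⟨fun i => ?_, fun A => ?_⟩, ?_⟩
  · refine sub_nonneg.2 (hmono fun x hx => ?_)
    rw [mem_firstElems] at hx ⊢
    omega
  · have key : ∀ k ≤ n, ∑ i ∈ A ∩ firstElems τ k, s i ≤ F (A ∩ firstElems τ k) := by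
      intro k
      induction k with
      | zero => simp [firstElems_zero, hF0]
      | succ k ih =>
        intro hk
        have ih := ih (by omega)
        have hsucc := firstElems_succ τ ⟨k, hk⟩
        have hnot := notMem_firstElems τ ⟨k, hk⟩
        have hs' := hsτ ⟨k, hk⟩
        simp only at hsucc hnot hs'
        by_cases hA : τ ⟨k, hk⟩ ∈ A
        -- diminishing returns for `A ∩ {τ 0, …, τ k}` and the prefix `{τ 0, …, τ (k - 1)}`
        · have hdim := hsub (A ∩ firstElems τ (k + 1)) (firstElems τ k)
          have h1 : A ∩ firstElems τ (k + 1) ∪ firstElems τ k = firstElems τ (k + 1) := by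
            rw [hsucc]; ext x; simp only [mem_union, mem_inter, mem_insert]; grind
          have h2 : A ∩ firstElems τ (k + 1) ∩ firstElems τ k = A ∩ firstElems τ k := by
            rw [hsucc]; ext x; simp only [mem_inter, mem_insert]; grind
          rw [h1, h2] at hdim
          have h3 : A ∩ firstElems τ (k + 1) = insert (τ ⟨k, hk⟩) (A ∩ firstElems τ k) := by
            rw [hsucc, Finset.inter_insert_of_mem hA]
          have h4 : ∑ i ∈ A ∩ firstElems τ (k + 1), s i
              = s (τ ⟨k, hk⟩) + ∑ i ∈ A ∩ firstElems τ k, s i := by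
            rw [h3, Finset.sum_insert (by simp [hnot])]
          rw [h4, hs']
          linarith
        · rw [hsucc, Finset.inter_insert_of_notMem hA]
          exact ih
    simpa [firstElems_last] using key n le_rfl
  · rw [hL, ← Equiv.sum_comp τ]
    refine Finset.sum_congr rfl fun k _ => ?_
    rw [hsτ, mul_comm]

/-! ### Projection onto the submodular polyhedron -/

lemma exists_projection {p : ℕ} (F : Finset (Fin p) → ℝ) (hmono : MonotoneF F)
    (hF0 : F ∅ = 0) (c : Fin p → ℝ) :
    ∃ s ∈ submodularPolyhedron F, ∀ s' ∈ submodularPolyhedron F,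
      ∑ i, (s i - c i) ^ 2 ≤ ∑ i, (s' i - c i) ^ 2 := by
  have hclosed : IsClosed (submodularPolyhedron F) := by
    have : submodularPolyhedron F = (⋂ i, {s : Fin p → ℝ | 0 ≤ s i}) ∩
        ⋂ A : Finset (Fin p), {s : Fin p → ℝ | ∑ k ∈ A, s k ≤ F A} := by
      ext s
      simp [submodularPolyhedron]
    rw [this]
    refine (isClosed_iInter fun i => ?_).inter (isClosed_iInter fun A => ?_)
    · exact isClosed_le (by fun_prop) (by fun_prop)
    · exact isClosed_le (by fun_prop) (by fun_prop)
  have hcomp : IsCompact (submodularPolyhedron F) := by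
    refine (isCompact_Icc (a := (0 : Fin p → ℝ)) (b := fun i => F {i})).of_isClosed_subset
      hclosed fun s hs => ⟨fun i => hs.1 i, fun i => by simpa using hs.2 {i}⟩
  have hne : (submodularPolyhedron F).Nonempty :=
    ⟨0, fun i => le_rfl, fun A => by simpa [hF0] using hmono (Finset.empty_subset A)⟩
  obtain ⟨s, hs, hmin⟩ := hcomp.exists_isMinOn hne
    (f := fun s => ∑ i, (s i - c i) ^ 2) (by fun_prop)
  exact ⟨s, hs, fun s' hs' => hmin hs'⟩

lemma sum_sq_expand {p : ℕ} (a c d : Fin p → ℝ) (t : ℝ) :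
    ∑ i, (a i + t * d i - c i) ^ 2 = ∑ i, (a i - c i) ^ 2
      + 2 * t * ∑ i, (a i - c i) * d i + t ^ 2 * ∑ i, d i ^ 2 := by
  rw [Finset.mul_sum, Finset.mul_sum, ← Finset.sum_add_distrib, ← Finset.sum_add_distrib]
  exact Finset.sum_congr rfl fun i _ => by ring

/-- Variational inequality characterising the projection of `c` onto the submodular polyhedron. -/
lemma projection_variational {p : ℕ} (F : Finset (Fin p) → ℝ) (c : Fin p → ℝ)
    {s : Fin p → ℝ} (hs : s ∈ submodularPolyhedron F)
    (hmin : ∀ s' ∈ submodularPolyhedron F,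
      ∑ i, (s i - c i) ^ 2 ≤ ∑ i, (s' i - c i) ^ 2)
    {s' : Fin p → ℝ} (hs' : s' ∈ submodularPolyhedron F) :
    0 ≤ ∑ i, (s i - c i) * (s' i - s i) := by
  set q := ∑ i, (s i - c i) * (s' i - s i) with hq
  set D := ∑ i, (s' i - s i) ^ 2 with hD
  have hD0 : 0 ≤ D := Finset.sum_nonneg fun i _ => sq_nonneg _
  have hseg : ∀ t : ℝ, 0 < t → t ≤ 1 → 0 ≤ 2 * q + t * D := by
    intro t ht ht1
    have hmem : (fun i => s i + t * (s' i - s i)) ∈ submodularPolyhedron F := by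
      refine ⟨fun i => ?_, fun A => ?_⟩
      · have h1 := hs.1 i
        have h2 := hs'.1 i
        nlinarith [mul_nonneg ht.le h2, mul_nonneg (sub_nonneg.2 ht1) h1]
      · rw [Finset.sum_add_distrib, ← Finset.mul_sum, Finset.sum_sub_distrib]
        nlinarith [mul_le_mul_of_nonneg_left (hs'.2 A) ht.le,
          mul_le_mul_of_nonneg_left (hs.2 A) (sub_nonneg.2 ht1)]
    have h := hmin _ hmem
    rw [sum_sq_expand s c (fun i => s' i - s i) t] at h
    have h' : 0 ≤ t * (2 * q + t * D) := by
      rw [hq, hD]; linarith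
    exact nonneg_of_mul_nonneg_right h' ht
  by_contra! hneg
  rcases le_or_gt D (-q) with hc | hc
  · linarith [hseg 1 one_pos le_rfl]
  · have hDpos : 0 < D := by linarith
    have h := hseg (-q / D) (div_pos (by linarith) hDpos) ((div_le_one hDpos).2 hc.le)
    rw [div_mul_cancel₀ _ hDpos.ne'] at h
    linarith

/-- The submodular polyhedron is stable under setting one coordinate to zero. -/
lemma update_zero_mem {p : ℕ} (F : Finset (Fin p) → ℝ) {s : Fin p → ℝ}
    (hs : s ∈ submodularPolyhedron F) (i : Fin p) :
    Function.update s i 0 ∈ submodularPolyhedron F := by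
  have hle : ∀ j, Function.update s i 0 j ≤ s j := by
    intro j
    rcases eq_or_ne j i with rfl | h
    · simpa using hs.1 j
    · simp [h]
  refine ⟨fun j => ?_, fun A => (Finset.sum_le_sum fun j _ => hle j).trans (hs.2 A)⟩
  rcases eq_or_ne j i with rfl | h
  · simp
  · simpa [h] using hs.1 j

lemma eq_of_sum_sq_nonpos {p : ℕ} {a b : Fin p → ℝ} (h : ∑ i, (a i - b i) ^ 2 ≤ 0) :
    a = b := by
  have h0 := (Finset.sum_eq_zero_iff_of_nonneg fun i _ => sq_nonneg (a i - b i)).1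
    (le_antisymm h (Finset.sum_nonneg fun i _ => sq_nonneg _))
  funext i
  exact sub_eq_zero.1 (pow_eq_zero_iff two_ne_zero |>.1 (h0 i (Finset.mem_univ i)))

/-! ### The proximal operator -/

/-- proximal operator: for `z ≥ 0` and `λ > 0`, the problem
`min_w ½‖w − z‖² + λΩ(w)` has a unique minimizer `w*`, the problem
`min_{s ∈ 𝒫} ‖s − z/λ‖²` has a unique minimizer `s*`, and `w* = z − λ s*`. -/
theorem omega_proximal {p : ℕ} (hp : 1 ≤ p) (F : Finset (Fin p) → ℝ)
    (hsub : Submodular F) (hmono : MonotoneF F) (hF0 : F ∅ = 0)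
    (hFpos : ∀ k : Fin p, 0 < F {k})
    (z : Fin p → ℝ) (hz : ∀ i, 0 ≤ z i) (lam : ℝ) (hlam : 0 < lam) :
    ∃ (wstar sstar : Fin p → ℝ),
      (∀ w : Fin p → ℝ,
        (1/2) * (∑ i, (wstar i - z i)^2) + lam * OmegaF F wstar ≤
          (1/2) * (∑ i, (w i - z i)^2) + lam * OmegaF F w) ∧
      (∀ w : Fin p → ℝ,
        (∀ w' : Fin p → ℝ,
          (1/2) * (∑ i, (w i - z i)^2) + lam * OmegaF F w ≤
            (1/2) * (∑ i, (w' i - z i)^2) + lam * OmegaF F w') → w = wstar) ∧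
      sstar ∈ submodularPolyhedron F ∧
      (∀ s ∈ submodularPolyhedron F,
        ∑ i, (sstar i - z i / lam)^2 ≤ ∑ i, (s i - z i / lam)^2) ∧
      (∀ s ∈ submodularPolyhedron F,
        (∀ s' ∈ submodularPolyhedron F,
          ∑ i, (s i - z i / lam)^2 ≤ ∑ i, (s' i - z i / lam)^2) → s = sstar) ∧
      (∀ i, wstar i = z i - lam * sstar i) := by
  obtain ⟨s, hs, hmin⟩ := exists_projection F hmono hF0 (fun i => z i / lam)
  have hvar := fun {s' : Fin p → ℝ} (hs' : s' ∈ submodularPolyhedron F) =>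
    projection_variational F _ hs hmin hs'
  let w : Fin p → ℝ := fun i => z i - lam * s i
  have hwc : ∀ i, s i - z i / lam = -(w i / lam) := by
    intro i
    simp only [w]
    field_simp
    ring
  have hvar' : ∀ s' ∈ submodularPolyhedron F, ∑ i, s' i * w i ≤ ∑ i, s i * w i := by
    intro s' hs'
    have h := hvar hs'
    have : ∑ i, (s i - z i / lam) * (s' i - s i)
        = (∑ i, s i * w i - ∑ i, s' i * w i) / lam := by
      rw [← Finset.sum_sub_distrib, Finset.sum_div]
      refine Finset.sum_congr rfl fun i _ => ?_
      rw [hwc]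
      ring
    rw [this] at h
    have := mul_nonneg h hlam.le
    rw [div_mul_cancel₀ _ hlam.ne'] at this
    linarith
  have hw0 : ∀ i, 0 ≤ w i := by
    intro i
    by_contra! hneg
    have h := hvar' _ (update_zero_mem F hs i)
    rw [← Finset.add_sum_erase _ _ (Finset.mem_univ i),
      ← Finset.add_sum_erase Finset.univ (fun j => s j * w j) (Finset.mem_univ i)] at h
    rw [Finset.sum_congr rfl (fun j hj => by
      rw [Function.update_of_ne (Finset.ne_of_mem_erase hj)] :
        ∀ j ∈ Finset.univ.erase i, Function.update s i 0 j * w j = s j * w j)] at h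
    simp only [Function.update_self, zero_mul, add_le_add_iff_right] at h
    have hsi : s i = 0 := by nlinarith [hs.1 i]
    have : w i = z i := by simp [w, hsi]
    linarith [hz i]
  have hΩ : OmegaF F w = ∑ i, s i * w i := by
    refine le_antisymm ?_ (inner_le_OmegaF F hF0 hs w)
    obtain ⟨s', hs', he⟩ := exists_greedy F hsub hmono hF0 w
    have habs : OmegaF F w = lovasz F w := by
      simp only [OmegaF, abs_of_nonneg (hw0 _)]
    rw [habs, ← he]
    exact hvar' s' (by assumption)
  -- quadratic growth of the primal objective around `w`
  have hgrow : ∀ v : Fin p → ℝ,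
      (1/2) * (∑ i, (w i - z i)^2) + lam * OmegaF F w + (1/2) * ∑ i, (v i - w i)^2 ≤
        (1/2) * (∑ i, (v i - z i)^2) + lam * OmegaF F v := by
    intro v
    have h1 := mul_le_mul_of_nonneg_left (inner_le_OmegaF F hF0 hs v) hlam.le
    have h2 : (1/2) * (∑ i, (w i - z i)^2) + lam * ∑ i, s i * w i
        + (1/2) * ∑ i, (v i - w i)^2
        = (1/2) * (∑ i, (v i - z i)^2) + lam * ∑ i, s i * v i := by
      simp only [Finset.mul_sum, ← Finset.sum_add_distrib]
      refine Finset.sum_congr rfl fun i _ => ?_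
      simp only [w]
      ring
    rw [hΩ]
    linarith
  refine ⟨w, s, fun v => ?_, fun v hv => ?_, hs, hmin, fun s' hs' hmin' => ?_, fun i => rfl⟩
  · have : 0 ≤ ∑ i, (v i - w i)^2 := Finset.sum_nonneg fun i _ => sq_nonneg _
    linarith [hgrow v]
  · exact eq_of_sum_sq_nonpos (by linarith [hgrow v, hv w])
  · have h := sum_sq_expand s (fun i => z i / lam) (fun i => s' i - s i) 1
    simp only [one_mul, add_sub_cancel] at h
    exact eq_of_sum_sq_nonpos (by linarith [hvar hs', hmin' s hs])
end
end

section
/- Let w ∈ ℝ^p with support J = Supp(w), and let H be the smallest stable set containing J. Then the subdifferential of Ω at w decomposes as ∂Ω(w) = {s ∈ ℝ^p : s_J ∈ ∂Ω_J(w_J), s_{H∖J} = 0, and (Ω^H)*(s_{H^c}) ≤ 1}, where (Ω^H)* is the dual norm of Ω^H on ℝ^{H^c}. -/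
/-! The Lovász extension at a nonnegative `w` equals `g ⬝ w`, where `g` is the greedy vector of an
ordering along which `w` decreases. The only facts about `g` that matter are `g ≥ 0`,
`g(A) ≤ F(A)` for every `A` (submodularity) and `g(L) = F(L)` on the superlevel sets `L` of `w`
(telescoping); see `exists_greedy`. Together with an Abel summation over superlevel sets they show
that `Ω` is the support function of the polytope `P(F) = {s : |s|(A) ≤ F(A) for all A}`. Hence
`s ∈ ∂Ω(w)` iff `s ∈ P(F)` and `s ⬝ w = Ω(w)` (`mem_subdiff_iff`), and the dual unit ball is `P(F)`
when singletons have positive value (`dualNorm_le_one_iff`). Moreover `s ∈ ∂Ω(w)` forces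
`|s|(J) = F(J)` on the support `J` of `w` (`sum_abs_supp_eq`).

By maximality `F(H) = F(J)`, so `|s|(H) ≤ F(H) = |s|(J)` gives `s = 0` on `H \ J`, and then
`|s|(A) = |s|(A ∪ H) - F(H) ≤ F^H(A)` for `A ⊆ Hᶜ`. Conversely
`|s|(A) = |s|(A ∩ J) + |s|(A \ H) ≤ F(A ∩ H) + F(A ∪ H) - F(H) ≤ F(A)` by submodularity. -/

open Finset MeasureTheory
open scoped Classical NNReal

noncomputable section

/-- The subdifferential of a function `h : ℝ^α → ℝ` at `w`. -/
def subdiff {α : Type*} [Fintype α] (h : (α → ℝ) → ℝ) (w : α → ℝ) : Set (α → ℝ) :=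
  {s | ∀ v : α → ℝ, h w + ∑ i, s i * (v i - w i) ≤ h v}

/-! ### Greedy vectors and Abel summation -/

/-- Abel summation: it suffices to test nonnegativity of `d` on the superlevel sets of `w` at
positive levels. -/
lemma abel_superlevel {α : Type*} (d : α → ℝ) (n : ℕ) : ∀ (S : Finset α) (w : α → ℝ),
    S.card = n → (∀ i ∈ S, 0 ≤ w i) →
    (∀ t : ℝ, 0 < t → 0 ≤ ∑ i ∈ S.filter (fun i => t ≤ w i), d i) →
    0 ≤ ∑ i ∈ S, d i * w i := by
  induction n using Nat.strong_induction_on with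
  | _ n ih =>
    intro S w hS hw hd
    rcases S.eq_empty_or_nonempty with rfl | hne
    · simp
    obtain ⟨m, hmS, hm⟩ := S.exists_min_image w hne
    -- Subtracting the minimal value `w m` leaves only the elements lying strictly above it.
    have h1 : 0 ≤ ∑ i ∈ S.filter (fun i => w m < w i), d i * (w i - w m) := by
      refine ih _ ?_ _ (fun i => w i - w m) rfl ?_ ?_
      · rw [← hS]
        refine Finset.card_lt_card (Finset.filter_ssubset.2 ⟨m, hmS, by simp⟩)
      · intro i hi
        have := (Finset.mem_filter.1 hi).2
        linarith
      · intro t ht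
        have h := hd (t + w m) (by have := hw m hmS; linarith)
        rw [Finset.filter_filter]
        convert h using 2
        ext i
        simp only [Finset.mem_filter]
        constructor
        · rintro ⟨h1, h2, h3⟩; exact ⟨h1, by linarith⟩
        · rintro ⟨h1, h2⟩; exact ⟨h1, by linarith, by linarith⟩
    have h2 : ∑ i ∈ S.filter (fun i => w m < w i), d i * (w i - w m)
        = ∑ i ∈ S, d i * (w i - w m) := by
      apply Finset.sum_filter_of_ne
      intro i hi hne
      rcases (hm i hi).lt_or_eq with h | h
      · exact h
      · exact absurd (by rw [h]; ring) hne
    have h3 : 0 ≤ w m * ∑ i ∈ S, d i := by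
      rcases (hw m hmS).lt_or_eq with h | h
      · have := hd (w m) h
        rw [Finset.filter_true_of_mem (fun i hi => hm i hi)] at this
        positivity
      · rw [← h]; simp
    have h4 : ∑ i ∈ S, d i * w i = ∑ i ∈ S, d i * (w i - w m) + w m * ∑ i ∈ S, d i := by
      rw [Finset.mul_sum, ← Finset.sum_add_distrib]
      exact Finset.sum_congr rfl fun i _ => by ring
    rw [h4, ← h2]
    linarith

/-- The greedy increments along an enumeration are dominated by `F`. -/
lemma greedy_le {α : Type*} [DecidableEq α] {n : ℕ} (F : Finset α → ℝ) (hsub : Submodular F)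
    (hF0 : F ∅ = 0) (e : Fin n ≃ α) (A : Finset (Fin n)) :
    ∑ k ∈ A, (F ((Finset.univ.filter (fun j => j ≤ k)).image e) -
      F ((Finset.univ.filter (fun j => j < k)).image e)) ≤ F (A.image e) := by
  induction A using Finset.induction_on_max with
  | empty => simp [hF0]
  | insert m A hlt ih =>
    rw [Finset.sum_insert (fun h => lt_irrefl _ (hlt m h))]
    have h := hsub ((insert m A).image e) ((Finset.univ.filter (fun j => j < m)).image e)
    rw [← Finset.image_union, ← Finset.image_inter _ _ e.injective] at h
    have hu : insert m A ∪ Finset.univ.filter (fun j => j < m)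
        = Finset.univ.filter (fun j => j ≤ m) := by
      ext j
      simp only [Finset.mem_union, Finset.mem_insert, Finset.mem_filter, Finset.mem_univ, true_and]
      constructor
      · rintro ((rfl | h) | h)
        · exact le_rfl
        · exact (hlt _ h).le
        · exact h.le
      · intro h
        rcases h.lt_or_eq with h | h
        · exact Or.inr h
        · exact Or.inl (Or.inl h)
    have hi : insert m A ∩ Finset.univ.filter (fun j => j < m) = A := by
      ext j
      simp only [Finset.mem_inter, Finset.mem_insert, Finset.mem_filter, Finset.mem_univ, true_and]
      constructor
      · rintro ⟨rfl | h, h'⟩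
        · exact absurd h' (lt_irrefl _)
        · exact h
      · exact fun h => ⟨Or.inr h, hlt _ h⟩
    rw [hu, hi] at h
    linarith

/-- On initial segments of the enumeration the greedy increments telescope to `F`. -/
lemma greedy_eq {α : Type*} [DecidableEq α] {n : ℕ} (F : Finset α → ℝ)
    (hF0 : F ∅ = 0) (e : Fin n ≃ α) (A : Finset (Fin n)) :
    (∀ i ∈ A, ∀ j, j ≤ i → j ∈ A) →
    ∑ k ∈ A, (F ((Finset.univ.filter (fun j => j ≤ k)).image e) -
      F ((Finset.univ.filter (fun j => j < k)).image e)) = F (A.image e) := by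
  induction A using Finset.induction_on_max with
  | empty => simp [hF0]
  | insert m A hlt ih =>
    intro hA
    have hAm : A = Finset.univ.filter (fun j => j < m) := by
      ext j
      simp only [Finset.mem_filter, Finset.mem_univ, true_and]
      refine ⟨hlt j, fun h => ?_⟩
      rcases Finset.mem_insert.1 (hA m (Finset.mem_insert_self _ _) j h.le) with h' | h'
      · exact absurd h' h.ne
      · exact h'
    have hIm : insert m A = Finset.univ.filter (fun j => j ≤ m) := by
      rw [hAm]
      ext j
      simp [le_iff_eq_or_lt]
    rw [Finset.sum_insert (fun h => lt_irrefl _ (hlt m h)), ih, hIm, ← hAm]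
    · ring
    · intro i hi j hj
      rcases Finset.mem_insert.1 (hA i (Finset.mem_insert_of_mem hi) j hj) with hc | hc
      · exact absurd (hc ▸ hj) (not_le.2 (hlt i hi))
      · exact hc

/-- Greedy vector for an ordering along which `w` decreases. No other property of the ordering chosen
in `lovasz` is needed to compare it with other linear forms. -/
lemma exists_greedy_s8 {α : Type*} [Fintype α] [DecidableEq α] (F : Finset α → ℝ)
    (hsub : Submodular F) (hmono : MonotoneF F) (hF0 : F ∅ = 0) (w : α → ℝ) :
    ∃ g : α → ℝ, lovasz F w = ∑ i, g i * w i ∧ (∀ i, 0 ≤ g i) ∧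
      (∀ A : Finset α, ∑ i ∈ A, g i ≤ F A) ∧
      (∀ t : ℝ, ∑ i ∈ Finset.univ.filter (fun i => t ≤ w i), g i =
        F (Finset.univ.filter (fun i => t ≤ w i))) := by
  let σ : Equiv.Perm (Fin (Fintype.card α)) :=
    Tuple.sort (fun i => -(w ((Fintype.equivFin α).symm i)))
  let e : Fin (Fintype.card α) ≃ α := σ.trans (Fintype.equivFin α).symm
  have hanti : ∀ i j, i ≤ j → w (e j) ≤ w (e i) := fun i j hij => by
    have := Tuple.monotone_sort (fun i => -(w ((Fintype.equivFin α).symm i))) hij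
    exact neg_le_neg_iff.1 this
  let γ : Fin (Fintype.card α) → ℝ := fun k =>
    F ((Finset.univ.filter (fun j => j ≤ k)).image e) -
      F ((Finset.univ.filter (fun j => j < k)).image e)
  have hsum : ∀ A : Finset α, ∑ i ∈ A, γ (e.symm i) = ∑ k ∈ A.image e.symm, γ k := fun A => by
    rw [Finset.sum_image e.symm.injective.injOn]
  have himg : ∀ A : Finset α, (A.image e.symm).image e = A := fun A => by
    rw [Finset.image_image]; simp
  refine ⟨fun i => γ (e.symm i), ?_, ?_, ?_, ?_⟩
  · rw [← e.sum_comp]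
    simp only [Equiv.symm_apply_apply]
    exact Finset.sum_congr rfl fun k _ => mul_comm _ _
  · intro i
    refine sub_nonneg.2 (hmono (Finset.image_subset_image ?_))
    intro j
    simpa using le_of_lt
  · intro A
    have := greedy_le F hsub hF0 e (A.image e.symm)
    rw [himg] at this
    rw [hsum]
    exact this
  · intro t
    have := greedy_eq F hF0 e ((Finset.univ.filter (fun i => t ≤ w i)).image e.symm) (by
      intro i hi j hj
      simp only [Finset.mem_image, Finset.mem_filter, Finset.mem_univ, true_and] at hi ⊢
      obtain ⟨a, ha, rfl⟩ := hi
      refine ⟨e j, ?_, by simp⟩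
      have := hanti _ _ hj
      simp only [Equiv.apply_symm_apply] at this
      linarith)
    rw [himg] at this
    rw [hsum]
    exact this

/-! ### `Ω` as a support function -/

/-- Membership in the symmetric submodular polyhedron `P(F)`: `|s|(A) ≤ F(A)` for every `A`. -/
def MemPoly {α : Type*} (F : Finset α → ℝ) (s : α → ℝ) : Prop :=
  ∀ A : Finset α, ∑ i ∈ A, |s i| ≤ F A

lemma sum_le_sum_abs {α : Type*} [Fintype α] (s v : α → ℝ) :
    ∑ i, s i * v i ≤ ∑ i, |s i| * |v i| :=
  Finset.sum_le_sum fun i _ => by rw [← abs_mul]; exact le_abs_self _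

section Support

variable {α : Type*} [Fintype α] [DecidableEq α] {F : Finset α → ℝ}

lemma sum_abs_le_Omega (hsub : Submodular F) (hmono : MonotoneF F) (hF0 : F ∅ = 0)
    {s : α → ℝ} (hs : MemPoly F s) (v : α → ℝ) : ∑ i, |s i| * |v i| ≤ OmegaF F v := by
  obtain ⟨g, hg, -, -, hgt⟩ := exists_greedy_s8 F hsub hmono hF0 (fun i => |v i|)
  have h := abel_superlevel (fun i => g i - |s i|) _ Finset.univ (fun i => |v i|) rfl
    (fun i _ => abs_nonneg _) (fun t _ => by
      rw [Finset.sum_sub_distrib, hgt t]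
      exact sub_nonneg.2 (hs _))
  simp only [sub_mul, Finset.sum_sub_distrib] at h
  unfold OmegaF
  rw [hg]
  linarith

lemma dot_le_Omega (hsub : Submodular F) (hmono : MonotoneF F) (hF0 : F ∅ = 0)
    {s : α → ℝ} (hs : MemPoly F s) (v : α → ℝ) : ∑ i, s i * v i ≤ OmegaF F v :=
  (sum_le_sum_abs s v).trans (sum_abs_le_Omega hsub hmono hF0 hs v)

lemma exists_dot_eq_Omega (hsub : Submodular F) (hmono : MonotoneF F) (hF0 : F ∅ = 0)
    (v : α → ℝ) : ∃ s, MemPoly F s ∧ ∑ i, s i * v i = OmegaF F v := by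
  obtain ⟨g, hg, hg0, hgA, -⟩ := exists_greedy_s8 F hsub hmono hF0 (fun i => |v i|)
  refine ⟨fun i => if 0 ≤ v i then g i else - g i, fun A => ?_, ?_⟩
  · refine le_trans (Finset.sum_le_sum fun i _ => ?_) (hgA A)
    beta_reduce
    split_ifs
    · rw [abs_of_nonneg (hg0 i)]
    · rw [abs_neg, abs_of_nonneg (hg0 i)]
  · unfold OmegaF
    rw [hg]
    refine Finset.sum_congr rfl fun i _ => ?_
    beta_reduce
    split_ifs with h
    · rw [abs_of_nonneg h]
    · rw [abs_of_neg (not_le.1 h)]; ring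

/-- A subgradient attaining `Ω(w)` saturates the constraint of `P(F)` at the support of `w`. -/
lemma sum_abs_supp_eq (hsub : Submodular F) (hmono : MonotoneF F) (hF0 : F ∅ = 0)
    {s : α → ℝ} (hs : MemPoly F s) (w : α → ℝ) (hw : ∑ i, s i * w i = OmegaF F w) :
    ∑ i ∈ suppF w, |s i| = F (suppF w) := by
  refine le_antisymm (hs _) ?_
  rcases (suppF w).eq_empty_or_nonempty with h0 | hne
  · simp [h0, hF0]
  have mem : ∀ i, i ∈ suppF w ↔ w i ≠ 0 := fun i => by simp [suppF]
  obtain ⟨m, hmS, hm⟩ := (suppF w).exists_min_image (fun i => |w i|) hne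
  have hmpos : 0 < |w m| := abs_pos.2 ((mem m).1 hmS)
  have hlev : Finset.univ.filter (fun i => |w m| ≤ |w i|) = suppF w := by
    ext i
    simp only [Finset.mem_filter, Finset.mem_univ, true_and]
    refine ⟨fun h => (mem i).2 fun h' => ?_, fun h => hm i h⟩
    rw [h', abs_zero] at h
    linarith
  obtain ⟨g, hg, -, -, hgt⟩ := exists_greedy_s8 F hsub hmono hF0 (fun i => |w i|)
  -- Lowering `|w|` by its smallest nonzero value on the support keeps its superlevel sets.
  have h := abel_superlevel (fun i => g i - |s i|) _ Finset.univ
    (fun i => |w i| - if i ∈ suppF w then |w m| else 0) rfl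
    (fun i _ => by
      split_ifs with hi
      · exact sub_nonneg.2 (hm i hi)
      · simp) (fun t ht => by
      have : Finset.univ.filter (fun i => t ≤ |w i| - if i ∈ suppF w then |w m| else 0)
          = Finset.univ.filter (fun i => t + |w m| ≤ |w i|) := by
        ext i
        simp only [Finset.mem_filter, Finset.mem_univ, true_and]
        split_ifs with hi
        · constructor <;> intro h <;> linarith
        · have : w i = 0 := by by_contra h; exact hi ((mem i).2 h)
          rw [this, abs_zero]
          constructor <;> intro h <;> linarith
      rw [this, Finset.sum_sub_distrib, hgt]
      exact sub_nonneg.2 (hs _))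
  have hexp : ∑ i, (g i - |s i|) * (|w i| - if i ∈ suppF w then |w m| else 0)
      = (∑ i, g i * |w i| - ∑ i, |s i| * |w i|)
        - |w m| * (∑ i ∈ suppF w, g i - ∑ i ∈ suppF w, |s i|) := by
    have h1 : ∑ i, (g i - |s i|) * (if i ∈ suppF w then |w m| else 0)
        = |w m| * (∑ i ∈ suppF w, g i - ∑ i ∈ suppF w, |s i|) := by
      rw [← Finset.sum_sub_distrib, Finset.mul_sum]
      simp only [mul_ite, mul_zero, Finset.sum_ite_mem, Finset.univ_inter]
      exact Finset.sum_congr rfl fun i _ => mul_comm _ _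
    simp only [mul_sub _ |w _|, Finset.sum_sub_distrib]
    rw [h1]
    simp only [sub_mul, Finset.sum_sub_distrib]
  rw [hexp] at h
  have h1 := sum_le_sum_abs s w
  have h2 : OmegaF F w = ∑ i, g i * |w i| := hg
  have h3 := hgt |w m|
  rw [hlev] at h3
  rw [← h3]
  have h4 : |w m| * (∑ i ∈ suppF w, g i - ∑ i ∈ suppF w, |s i|) ≤ 0 := by linarith
  have := nonpos_of_mul_nonpos_right h4 hmpos
  linarith

/-- The value of `Ω` at a signed, scaled indicator of `A` is at most `c F(A)`. -/
lemma Omega_sign_le (hsub : Submodular F) (hmono : MonotoneF F) (hF0 : F ∅ = 0)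
    (s : α → ℝ) (A : Finset α) {c : ℝ} (hc : 0 ≤ c) :
    OmegaF F (fun i => if i ∈ A then (if 0 ≤ s i then c else -c) else 0) ≤ c * F A := by
  obtain ⟨t, ht, hte⟩ := exists_dot_eq_Omega hsub hmono hF0
    (fun i => if i ∈ A then (if 0 ≤ s i then c else -c) else 0)
  rw [← hte]
  simp only [mul_ite, mul_zero, Finset.sum_ite_mem, Finset.univ_inter]
  refine le_trans ?_ (mul_le_mul_of_nonneg_left (ht A) hc)
  rw [Finset.mul_sum]
  refine Finset.sum_le_sum fun i _ => ?_
  split_ifs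
  · rw [mul_comm]; exact mul_le_mul_of_nonneg_left (le_abs_self _) hc
  · rw [mul_neg, mul_comm, ← mul_neg]; exact mul_le_mul_of_nonneg_left (neg_le_abs _) hc

lemma dot_sign_eq (s : α → ℝ) (A : Finset α) (c : ℝ) :
    ∑ i, s i * (if i ∈ A then (if 0 ≤ s i then c else -c) else 0) = c * ∑ i ∈ A, |s i| := by
  rw [Finset.mul_sum]
  rw [← Finset.univ_inter A, ← Finset.sum_ite_mem]
  refine Finset.sum_congr rfl fun i _ => ?_
  simp only [Finset.mem_inter, Finset.mem_univ, true_and]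
  split_ifs with h1 h2
  · rw [abs_of_nonneg h2]; ring
  · rw [abs_of_neg (not_le.1 h2)]; ring
  · simp

lemma memPoly_of_dot_le (hsub : Submodular F) (hmono : MonotoneF F) (hF0 : F ∅ = 0)
    {s : α → ℝ} (h : ∀ v : α → ℝ, ∑ i, s i * v i ≤ OmegaF F v) : MemPoly F s := by
  intro A
  have h1 := (h _).trans (Omega_sign_le hsub hmono hF0 s A zero_le_one)
  rw [dot_sign_eq] at h1
  linarith

lemma mem_subdiff_iff (hsub : Submodular F) (hmono : MonotoneF F) (hF0 : F ∅ = 0)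
    (w s : α → ℝ) :
    s ∈ subdiff (OmegaF F) w ↔ MemPoly F s ∧ ∑ i, s i * w i = OmegaF F w := by
  have key : s ∈ subdiff (OmegaF F) w ↔
      ∀ v : α → ℝ, OmegaF F w + (∑ i, s i * v i - ∑ i, s i * w i) ≤ OmegaF F v := by
    simp only [subdiff, Set.mem_ofPred_eq, mul_sub, Finset.sum_sub_distrib]
  rw [key]
  constructor
  · intro h
    -- Testing at `0` and at `2w` gives Euler's identity `s ⬝ w = Ω(w)`.
    have h0 := h 0
    have h2 := h (fun i => 2 * w i)
    obtain ⟨t, ht, hte⟩ := exists_dot_eq_Omega hsub hmono hF0 (0 : α → ℝ)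
    obtain ⟨u, hu, hue⟩ := exists_dot_eq_Omega hsub hmono hF0 (fun i => 2 * w i)
    have huw := dot_le_Omega hsub hmono hF0 hu w
    have dbl : ∀ x : α → ℝ, ∑ i, x i * (2 * w i) = 2 * ∑ i, x i * w i := fun x => by
      rw [Finset.mul_sum]
      exact Finset.sum_congr rfl fun i _ => by ring
    rw [← hte] at h0
    rw [← hue] at h2
    rw [dbl, dbl] at h2
    simp only [Pi.zero_apply, mul_zero, Finset.sum_const_zero] at h0
    have heq : ∑ i, s i * w i = OmegaF F w := by linarith
    exact ⟨memPoly_of_dot_le hsub hmono hF0 fun v => by linarith [h v], heq⟩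
  · rintro ⟨hs, heq⟩ v
    linarith [dot_le_Omega hsub hmono hF0 hs v]

lemma dualNorm_le_one_iff (hsub : Submodular F) (hmono : MonotoneF F) (hF0 : F ∅ = 0)
    (hpos : ∀ k, 0 < F {k}) (s : α → ℝ) : dualNorm (OmegaF F) s ≤ 1 ↔ MemPoly F s := by
  constructor
  · intro h A
    rcases A.eq_empty_or_nonempty with rfl | ⟨k, hk⟩
    · simp [hF0]
    have hFA : 0 < F A := (hpos k).trans_le (hmono (Finset.singleton_subset_iff.2 hk))
    -- `sSup` of an unbounded set is `0`, so boundedness of the set has to be checked: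
    -- `F {i} • e_i ∈ P(F)` bounds each coordinate of the unit ball of `Ω`.
    have hbdd : BddAbove {x : ℝ | ∃ w : α → ℝ, OmegaF F w ≤ 1 ∧ x = ∑ i, s i * w i} := by
      refine ⟨∑ i, |s i| * (1 / F {i}), ?_⟩
      rintro x ⟨w, hw, rfl⟩
      refine (sum_le_sum_abs s w).trans (Finset.sum_le_sum fun i _ => ?_)
      refine mul_le_mul_of_nonneg_left ?_ (abs_nonneg _)
      have hmem : MemPoly F (fun j => if j = i then F {i} else 0) := by
        intro B
        have : ∀ j, |if j = i then F {i} else 0| = if j = i then F {i} else 0 := fun j => by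
          split_ifs
          · exact abs_of_pos (hpos i)
          · exact abs_zero
        simp only [this, Finset.sum_ite_eq']
        split_ifs with hB
        · exact hmono (Finset.singleton_subset_iff.2 hB)
        · rw [← hF0]; exact hmono (Finset.empty_subset _)
      have h1 := sum_abs_le_Omega hsub hmono hF0 hmem w
      have h2 := Finset.single_le_sum
        (f := fun j => |if j = i then F {i} else 0| * |w j|)
        (fun j _ => by positivity) (Finset.mem_univ i)
      simp only [if_true, abs_of_pos (hpos i)] at h2
      rw [le_div_iff₀ (hpos i), mul_comm]
      linarith
    have h1 := le_csSup hbdd ⟨_, (Omega_sign_le hsub hmono hF0 s A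
      (inv_nonneg.2 hFA.le)).trans (inv_mul_cancel₀ hFA.ne').le, rfl⟩
    rw [dot_sign_eq] at h1
    have h2 := h1.trans h
    rwa [inv_mul_le_iff₀ hFA, mul_one] at h2
  · intro hs
    refine Real.sSup_le ?_ zero_le_one
    rintro x ⟨w, hw, rfl⟩
    exact (dot_le_Omega hsub hmono hF0 hs w).trans hw

end Support

/-! ### Restriction, contraction and the stable hull -/

section RestrictContract

variable {p : ℕ} {F : Finset (Fin p) → ℝ}

lemma Frestrict_submodular (hsub : Submodular F) (J : Finset (Fin p)) :
    Submodular (Frestrict F J) := by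
  intro A B
  have := hsub (A.image Subtype.val) (B.image Subtype.val)
  rw [← Finset.image_union, ← Finset.image_inter _ _ Subtype.val_injective] at this
  exact this

lemma Frestrict_mono (hmono : MonotoneF F) (J : Finset (Fin p)) : MonotoneF (Frestrict F J) :=
  fun _ _ h => hmono (Finset.image_subset_image h)

lemma Frestrict_empty (hF0 : F ∅ = 0) (J : Finset (Fin p)) : Frestrict F J ∅ = 0 := by
  simp [Frestrict, hF0]

lemma Fcontract_submodular (hsub : Submodular F) (J : Finset (Fin p)) :
    Submodular (Fcontract F J) := by
  intro A B
  have := hsub (A.image Subtype.val ∪ J) (B.image Subtype.val ∪ J)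
  rw [← Finset.union_union_distrib_right, ← Finset.inter_union_distrib_right,
    ← Finset.image_union, ← Finset.image_inter _ _ Subtype.val_injective] at this
  simp only [Fcontract]
  linarith

lemma Fcontract_mono (hmono : MonotoneF F) (J : Finset (Fin p)) : MonotoneF (Fcontract F J) :=
  fun _ _ h => sub_le_sub_right
    (hmono (Finset.union_subset_union_left (Finset.image_subset_image h))) _

lemma Fcontract_empty (J : Finset (Fin p)) : Fcontract F J ∅ = 0 := by
  simp [Fcontract]

/-- Stability of `H` makes the contraction positive on singletons. -/
lemma Fcontract_pos {H : Finset (Fin p)} (hH : StableSet F H) (k : {x : Fin p // x ∈ Hᶜ}) :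
    0 < Fcontract F H {k} := by
  refine sub_pos.2 (hH _ Finset.subset_union_right fun h => ?_)
  exact Finset.mem_compl.1 k.2 (h.symm.subset (by simp))

lemma memPoly_restrict {s : Fin p → ℝ} (J : Finset (Fin p)) :
    MemPoly (Frestrict F J) (fun j => s j.1) ↔ ∀ A ⊆ J, ∑ i ∈ A, |s i| ≤ F A := by
  constructor
  · intro h A hA
    have h1 := h (A.subtype (· ∈ J))
    have h2 : (A.subtype (· ∈ J)).image Subtype.val = A := by
      ext i
      simpa using fun hi => hA hi
    unfold Frestrict at h1
    rw [h2] at h1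
    rwa [← h2, Finset.sum_image Subtype.val_injective.injOn, h2]
  · intro h A
    have h1 := h (A.image Subtype.val) (by
      intro i hi
      obtain ⟨a, -, rfl⟩ := Finset.mem_image.1 hi
      exact a.2)
    rwa [Finset.sum_image Subtype.val_injective.injOn] at h1

lemma memPoly_contract {s : Fin p → ℝ} (H : Finset (Fin p)) :
    MemPoly (Fcontract F H) (fun j => s j.1) ↔
      ∀ A ⊆ Hᶜ, ∑ i ∈ A, |s i| ≤ F (A ∪ H) - F H :=
  memPoly_restrict (F := fun A => F (A ∪ H) - F H) Hᶜ

lemma dot_restrict {w : Fin p → ℝ} {J : Finset (Fin p)} (hJ : J = suppF w) (s : Fin p → ℝ) :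
    ∑ j : {x : Fin p // x ∈ J}, s j.1 * w j.1 = ∑ i, s i * w i := by
  rw [Finset.sum_coe_sort J (fun i => s i * w i)]
  refine Finset.sum_subset (Finset.subset_univ _) fun i _ hi => ?_
  have : w i = 0 := by
    by_contra h
    exact hi (by simp [hJ, suppF, h])
  rw [this, mul_zero]

lemma Omega_restrict (hsub : Submodular F) (hmono : MonotoneF F) (hF0 : F ∅ = 0)
    {w : Fin p → ℝ} {J : Finset (Fin p)} (hJ : J = suppF w) :
    OmegaF (Frestrict F J) (fun j => w j.1) = OmegaF F w := by
  apply le_antisymm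
  · obtain ⟨t, ht, hte⟩ := exists_dot_eq_Omega (Frestrict_submodular hsub J)
      (Frestrict_mono hmono J) (Frestrict_empty hF0 J) (fun j => w j.1)
    -- Extension by zero maps `P(F_J)` into `P(F)`, because `F` is nondecreasing.
    let s : Fin p → ℝ := fun i => if h : i ∈ J then t ⟨i, h⟩ else 0
    have hst : (fun j : {x : Fin p // x ∈ J} => s j.1) = t := by
      funext j
      simp [s]
    rw [← hst] at ht hte
    rw [memPoly_restrict] at ht
    rw [← hte, dot_restrict hJ]
    refine dot_le_Omega hsub hmono hF0 (fun A => ?_) w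
    refine le_trans (le_of_eq ?_) ((ht _ Finset.inter_subset_right).trans
      (hmono (Finset.inter_subset_left (s₁ := A))))
    symm
    refine Finset.sum_subset Finset.inter_subset_left fun i hi hi' => ?_
    have : i ∉ J := fun h => hi' (Finset.mem_inter.2 ⟨hi, h⟩)
    simp [s, this]
  · obtain ⟨s, hs, hse⟩ := exists_dot_eq_Omega hsub hmono hF0 w
    rw [← hse, ← dot_restrict hJ]
    exact dot_le_Omega (Frestrict_submodular hsub J) (Frestrict_mono hmono J)
      (Frestrict_empty hF0 J) ((memPoly_restrict J).2 fun A _ => hs A) (fun j => w j.1)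

/-- The smallest stable set containing `J` has the same value as `J`: a largest superset of `J`
with value `F(J)` is stable. -/
lemma stable_hull_eq (hmono : MonotoneF F) {J H : Finset (Fin p)} (hJH : J ⊆ H)
    (hHmin : ∀ H' : Finset (Fin p), StableSet F H' → J ⊆ H' → H ⊆ H') : F H = F J := by
  obtain ⟨M, hM, hmax⟩ := Finset.exists_max_image
    (Finset.univ.filter (fun M : Finset (Fin p) => J ⊆ M ∧ F M = F J)) Finset.card
    ⟨J, by simp⟩
  simp only [Finset.mem_filter, Finset.mem_univ, true_and] at hM hmax
  have hst : StableSet F M := by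
    intro B hMB hne
    refine lt_of_le_of_ne (hmono hMB) fun h => hne ?_
    exact Finset.eq_of_subset_of_card_le hMB (hmax B ⟨hM.1.trans hMB, h ▸ hM.2⟩)
  have h1 := hmono (hHmin M hst hM.1)
  have h2 := hmono hJH
  linarith [hM.2]

end RestrictContract

/-- decomposition of the subdifferential: with `J = Supp w` and `H` the
smallest stable set containing `J`, `∂Ω(w)` consists of the `s` whose restriction to `J`
lies in `∂Ω_J(w_J)`, which vanish on `H ∖ J`, and whose restriction to `Hᶜ` has dual
norm `(Ω^H)*` at most 1. -/
theorem omega_subdifferential_decomposition {p : ℕ} (hp : 1 ≤ p) (F : Finset (Fin p) → ℝ)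
    (hsub : Submodular F) (hmono : MonotoneF F) (hF0 : F ∅ = 0)
    (hFpos : ∀ k : Fin p, 0 < F {k})
    (w : Fin p → ℝ) (J H : Finset (Fin p)) (hJ : J = suppF w)
    (hHstable : StableSet F H) (hJH : J ⊆ H)
    (hHmin : ∀ H' : Finset (Fin p), StableSet F H' → J ⊆ H' → H ⊆ H') :
    subdiff (OmegaF F) w =
      {s : Fin p → ℝ |
        (fun j : {x : Fin p // x ∈ J} => s j.1) ∈
          subdiff (OmegaF (Frestrict F J)) (fun j : {x : Fin p // x ∈ J} => w j.1) ∧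
        (∀ i ∈ H, i ∉ J → s i = 0) ∧
        dualNorm (OmegaF (Fcontract F H)) (fun j : {x : Fin p // x ∈ Hᶜ} => s j.1) ≤ 1} := by
  have hr := Frestrict_submodular hsub J
  have hr' := Frestrict_mono hmono J
  have hr0 := Frestrict_empty hF0 J
  have hOm := Omega_restrict hsub hmono hF0 hJ
  ext s
  rw [Set.mem_ofPred_eq, mem_subdiff_iff hsub hmono hF0, mem_subdiff_iff hr hr' hr0,
    dualNorm_le_one_iff (Fcontract_submodular hsub H) (Fcontract_mono hmono H)
      (Fcontract_empty H) (Fcontract_pos hHstable), memPoly_restrict, memPoly_contract, hOm,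
    dot_restrict hJ]
  constructor
  · rintro ⟨hs, hsw⟩
    have hFH : F H = F J := stable_hull_eq hmono hJH hHmin
    have hJs : ∑ i ∈ J, |s i| = F J := by
      rw [hJ]
      exact sum_abs_supp_eq hsub hmono hF0 hs w hsw
    have hsd := Finset.sum_sdiff (f := fun i => |s i|) hJH
    have hHs := hs H
    have hz : ∑ i ∈ H \ J, |s i| = 0 :=
      le_antisymm (by linarith) (Finset.sum_nonneg fun i _ => abs_nonneg _)
    refine ⟨⟨fun A _ => hs A, hsw⟩, fun i hiH hiJ => ?_, fun A hA => ?_⟩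
    · exact abs_eq_zero.1 ((Finset.sum_eq_zero_iff_of_nonneg fun i _ => abs_nonneg (s i)).1 hz i
        (Finset.mem_sdiff.2 ⟨hiH, hiJ⟩))
    · have hdisj : Disjoint A H := Finset.disjoint_left.2 fun i hi => Finset.mem_compl.1 (hA hi)
      have hAH := hs (A ∪ H)
      rw [Finset.sum_union hdisj] at hAH
      linarith
  · rintro ⟨⟨hsJ, hsw⟩, hz, hsH⟩
    refine ⟨fun A => ?_, hsw⟩
    have h1 := hsJ (A ∩ J) Finset.inter_subset_right
    have h2 := hsH (A \ H) (by
      intro i hi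
      exact Finset.mem_compl.2 (Finset.mem_sdiff.1 hi).2)
    rw [Finset.sdiff_union_self_eq_union] at h2
    have h3 := hsub A H
    have h4 : F (A ∩ J) ≤ F (A ∩ H) := hmono (Finset.inter_subset_inter_left hJH)
    have h5 : ∑ i ∈ A ∩ H, |s i| = ∑ i ∈ A ∩ J, |s i| := by
      symm
      refine Finset.sum_subset (Finset.inter_subset_inter_left hJH) fun i hi hi' => ?_
      have hi := Finset.mem_inter.1 hi
      rw [hz i hi.2 fun h => hi' (Finset.mem_inter.2 ⟨hi.1, h⟩), abs_zero]
    have h6 := Finset.sum_inter_add_sum_sdiff A H (fun i => |s i|)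
    linarith
end
end
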